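/- arXiv:1806.04325 — 2 statements merged into one kernel-verified Lean document; each statement's English description precedes it below -/
import Mathlib

section
/- Let A be a deterministic Büchi automaton over a nonempty finite alphabet α, with finite state type σ, total transition function step : σ → α → σ, initial state q₀, and accepting set F ⊆ σ. Assume every state q of A can reach F, i.e., for every q there exists a finite word w : List α with List.foldl step q w ∈ F. Then for every finite word p : List α there exists a stream s : ℕ → α accepted by A (its run visits F infinitely often) such that p is a prefix of s, i.e., for all i < p.length, s i equals the i-th letter of p. -/
/-!
In a pruned automaton the words whose run ends in `F` form a set `L` that is cofinal for the prefix
order: every word is a prefix of a word in `L`. Starting from `p`, repeatedly prolong the current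
word by a letter and then to a word of `L`; the resulting strictly growing chain of words converges
to a stream with infinitely many prefixes in `L`.
-/

theorem exists_map_range_eq_of_prefix_chain {α : Type*} {W : ℕ → List α}
    (hprefix : ∀ n, W n <+: W (n + 1)) (hlength : ∀ i, ∃ n, i < (W n).length) :
    ∃ s : ℕ → α, ∀ n, (List.range (W n).length).map s = W n := by
  have prefix_of_le {m n : ℕ} (hmn : m ≤ n) : W m <+: W n :=
    Nat.rel_of_forall_rel_succ_of_le (· <+: ·) hprefix hmn
  choose N lt_length using hlength
  refine ⟨fun i => (W (N i))[i]'(lt_length i), fun n => ?_⟩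
  refine List.ext_getElem (by simp) fun i _ hi => ?_
  simp only [List.getElem_map, List.getElem_range]
  rcases le_total (N i) n with hle | hle
  · exact (prefix_of_le hle).getElem (lt_length i)
  · exact ((prefix_of_le hle).getElem hi).symm

theorem exists_longer_mem_of_cofinal {α : Type*} [Nonempty α] {L : Set (List α)}
    (hL : ∀ u, ∃ v ∈ L, u <+: v) (u : List α) :
    ∃ v ∈ L, u <+: v ∧ u.length < v.length := by
  obtain ⟨a⟩ := ‹Nonempty α›
  obtain ⟨v, hv, huv⟩ := hL (u ++ [a])
  exact ⟨v, hv, (List.prefix_append u [a]).trans huv, by simpa using huv.length_le⟩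

theorem exists_stream_infinite_prefixes_mem {α : Type*} [Nonempty α] {L : Set (List α)}
    (hL : ∀ u, ∃ v ∈ L, u <+: v) (p : List α) :
    ∃ s : ℕ → α, {n | (List.range n).map s ∈ L}.Infinite ∧
      (List.range p.length).map s = p := by
  choose next next_mem prefix_next length_lt_next using exists_longer_mem_of_cofinal hL
  let W (n : ℕ) : List α := next^[n] p
  have W_succ (n : ℕ) : W (n + 1) = next (W n) := Function.iterate_succ_apply' next n p
  have hlength : StrictMono fun n => (W n).length :=
    strictMono_nat_of_lt_succ fun n => W_succ n ▸ length_lt_next (W n)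
  obtain ⟨s, hs⟩ := exists_map_range_eq_of_prefix_chain
    (fun n => W_succ n ▸ prefix_next (W n)) fun i => ⟨i + 1, hlength.le_apply⟩
  refine ⟨s, ?_, hs 0⟩
  refine Set.infinite_of_injective_forall_mem
    (hlength.injective.comp (add_left_injective 1)) fun n => ?_
  change (List.range (W (n + 1)).length).map s ∈ L
  rw [hs, W_succ]
  exact next_mem (W n)

theorem run_eq_foldl_map_range {α σ : Type*} {step : σ → α → σ} {s : ℕ → α} {r : ℕ → σ}
    (hr : ∀ i, r (i + 1) = step (r i) (s i)) (n : ℕ) :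
    r n = ((List.range n).map s).foldl step (r 0) := by
  induction n with
  | zero => rfl
  | succ n ih => simp [List.range_succ, hr, ← ih]

theorem prefix_extends_to_accepted_stream_general {α σ : Type*} [Nonempty α]
    (step : σ → α → σ) (q₀ : σ) (F : Set σ)
    (run : (ℕ → α) → ℕ → σ)
    (hrun0 : ∀ s : ℕ → α, run s 0 = q₀)
    (hrunS : ∀ (s : ℕ → α) (i : ℕ), run s (i + 1) = step (run s i) (s i))
    (hreach : ∀ u : List α, ∃ w : List α, List.foldl step (List.foldl step q₀ u) w ∈ F)
    (p : List α) :
    ∃ s : ℕ → α, {i : ℕ | run s i ∈ F}.Infinite ∧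
      ∀ i : ℕ, (h : i < p.length) → s i = p.get ⟨i, h⟩ := by
  have hcofinal (u : List α) : ∃ v ∈ {v | v.foldl step q₀ ∈ F}, u <+: v := by
    obtain ⟨w, hw⟩ := hreach u
    exact ⟨u ++ w, by simpa using hw, List.prefix_append u w⟩
  obtain ⟨s, hinf, hp⟩ := exists_stream_infinite_prefixes_mem hcofinal p
  refine ⟨s, ?_, fun i hi => ?_⟩
  · have hrun (i : ℕ) : run s i = ((List.range i).map s).foldl step q₀ :=
      hrun0 s ▸ run_eq_foldl_map_range (hrunS s) i
    simpa only [hrun, Set.mem_ofPred_eq] using hinf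
  · calc
      s i = ((List.range p.length).map s)[i]'(by simpa using hi) := by simp
      _ = p[i] := List.getElem_of_eq hp _

/-- In a pruned deterministic Büchi automaton (every state can reach `F`),
every finite word is the prefix of some accepted stream. -/
theorem prefix_extends_to_accepted_stream
    {α σ : Type*} [Fintype α] [Fintype σ] [Nonempty α]
    (step : σ → α → σ) (q₀ : σ) (F : Set σ)
    (run : (ℕ → α) → ℕ → σ)
    (hrun0 : ∀ s : ℕ → α, run s 0 = q₀)
    (hrunS : ∀ (s : ℕ → α) (i : ℕ), run s (i + 1) = step (run s i) (s i))
    (hreach : ∀ q : σ, ∃ w : List α, List.foldl step q w ∈ F)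
    (p : List α) :
    ∃ s : ℕ → α, {i : ℕ | run s i ∈ F}.Infinite ∧
      ∀ i : ℕ, (h : i < p.length) → s i = p.get ⟨i, h⟩ :=
  prefix_extends_to_accepted_stream_general step q₀ F run hrun0 hrunS (fun _ => hreach _) p
end

section
/- For streams a, b : ℕ → ℤ, define Until a b to hold iff there exists i ≥ 0 such that b i ≠ 0 and for all j < i, a j ≠ 0. Let c : ℕ → Prop be any predicate satisfying the recurrence c 0 ↔ (b 0 ≠ 0) and, for all i, c (i+1) ↔ (b (i+1) ≠ 0 ∨ c i). Then Until a b holds if and only if both (for every i, if ¬ c i then a i ≠ 0) and (there exists i with b i ≠ 0). -/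
/-- The `until` constraint of stream constraint programming: `Until a b` holds
iff there is a time `i` with `b i ≠ 0` and `a j ≠ 0` for all `j < i`. -/
def Until (a b : ℕ → ℤ) : Prop :=
  ∃ i : ℕ, b i ≠ 0 ∧ ∀ j < i, a j ≠ 0

theorem exists_and_forall_lt_iff_forall_not_exists_le {α : Type*} [LinearOrder α]
    [WellFoundedLT α] {p q : α → Prop} :
    (∃ i, q i ∧ ∀ j < i, p j) ↔ (∀ i, (¬ ∃ j ≤ i, q j) → p i) ∧ ∃ i, q i := by
  constructor
  · rintro ⟨i, hqi, hp⟩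
    exact ⟨fun k hk => hp k (not_le.mp fun hik => hk ⟨i, hik, hqi⟩), i, hqi⟩
  · rintro ⟨hp, hq⟩
    -- The times by which `q` has not yet held are exactly those before the first time it holds.
    obtain ⟨i, hi⟩ := exists_minimal_of_wellFoundedLT q hq
    refine ⟨i, hi.prop, fun j hji => hp j ?_⟩
    rintro ⟨k, hkj, hqk⟩
    exact hi.not_prop_of_lt (hkj.trans_lt hji) hqk

theorem iff_exists_le_of_succ_iff_or {q c : ℕ → Prop} (hc0 : c 0 ↔ q 0)
    (hcS : ∀ i, c (i + 1) ↔ q (i + 1) ∨ c i) (i : ℕ) : c i ↔ ∃ j ≤ i, q j := by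
  induction i with
  | zero => simp only [hc0, Nat.le_zero, exists_eq_left]
  | succ i ih =>
    calc
      c (i + 1) ↔ q (i + 1) ∨ c i := hcS i
      _ ↔ (∃ j ≤ i, q j) ∨ q (i + 1) := by rw [ih, or_comm]
      _ ↔ ∃ j ≤ i + 1, q j := by
        simp only [Nat.le_add_one_iff, or_and_right, exists_or, exists_eq_left]

theorem until_iff_aux_decomposition_general {p q c : ℕ → Prop} (hc0 : c 0 ↔ q 0)
    (hcS : ∀ i, c (i + 1) ↔ q (i + 1) ∨ c i) :
    (∃ i, q i ∧ ∀ j < i, p j) ↔ (∀ i, ¬ c i → p i) ∧ ∃ i, q i := by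
  simp only [iff_exists_le_of_succ_iff_or hc0 hcS]
  exact exists_and_forall_lt_iff_forall_not_exists_le

/-- `a until b` is equivalent to `c == b fby (next b or c)`,
`(not c) -> (a ne 0)` and `eventually b`, where `c` records whether `b` has
been nonzero at some time point up to the present. -/
theorem until_iff_aux_decomposition (a b : ℕ → ℤ) (c : ℕ → Prop)
    (hc0 : c 0 ↔ b 0 ≠ 0)
    (hcS : ∀ i : ℕ, c (i + 1) ↔ (b (i + 1) ≠ 0 ∨ c i)) :
    Until a b ↔ ((∀ i : ℕ, ¬ c i → a i ≠ 0) ∧ ∃ i : ℕ, b i ≠ 0) :=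
  until_iff_aux_decomposition_general hc0 hcS
end
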